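/- Let q be a prime power with q ≥ 4 and let P be a closed point of degree 3 of P² over F_q not contained in any F_q-rational line, given by a point p ∈ P²(F_{q³}) whose Frobenius orbit {p, φ(p), φ²(p)} has exactly 3 elements, these three points being non-collinear. Let V be the F_q-vector space of homogeneous polynomials of degree 4 in F_q[x,y,z] vanishing at p. Then the evaluation code C_L(Z, L_4), obtained by evaluating the elements of V at the q² + q + 1 points of P²(F_q), has parameters [q² + q + 1, 12, q² − 2q − 1]: its length is q² + q + 1, its dimension is 12 (in particular dim V = 12 and the evaluation map is injective), and its minimum distance is exactly q² − 2q − 1. -/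

import Mathlib

open MvPolynomial

noncomputable section

/-!
A plane curve `f = 0` of degree `d ≥ 2` over `F_q` without a rational line as component has at most
`(d - 1)(q + 1)` rational points: on a line through a rational point `Q` of the curve, `f` has at
most `d - 1` further zeros, and at most `d - 2` if the line is tangent at `Q`, so it suffices to sum
over the pencil of lines through `Q`. If equality holds, every line of every such pencil attains its
bound; for `d ≥ 3` this is contradictory, as is seen by comparing the pencils at `Q` and at a second
zero on the tangent line at `Q`. Hence the bound is strict for `d ≥ 3`.

No rational line passes through `p`, so a nonzero quartic through `p` has at most two rational lines
as components (with multiplicity), and in each case the bound for the residual curve shows that it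
has at most `3q + 2` rational points. The value `3q + 2` is attained by a conic through `p` together
with two lines that meet the conic in no rational point. In suitable coordinates `p = (1 : τ : τ²)`
with `τ` a primitive element of `F_{q³}`, and the conic `x₀ x₂ = x₁²` and the lines
`c x₀ + b x₁ + x₂ = 0`, where `T² + b T + c` has no root in `F_q`, will do.

Evaluation at `p` maps the quartics onto the three-dimensional space `F_{q³}`, since already the
linear forms surject onto it; this leaves a space of dimension `15 - 3 = 12`.
-/

section Homogeneous

variable {σ R A : Type*} [CommSemiring R]

theorem aeval_smul_of_isHomogeneous [CommSemiring A] [Algebra R A] {f : MvPolynomial σ R} {d : ℕ}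
    (hf : f.IsHomogeneous d) (c : A) (x : σ → A) : aeval (c • x) f = c ^ d * aeval x f := by
  simp only [aeval_def, eval₂_eq, Finset.mul_sum]
  refine Finset.sum_congr rfl fun m hm => ?_
  have hm_degree : m.degree = d := by
    by_contra h
    exact mem_support_iff.1 hm (hf.coeff_eq_zero h)
  simp only [Pi.smul_apply, smul_eq_mul, mul_pow, Finset.prod_mul_distrib,
    Finset.prod_pow_eq_pow_sum, ← Finsupp.degree_apply, hm_degree]
  ring

theorem eval_smul_of_isHomogeneous {f : MvPolynomial σ R} {d : ℕ} (hf : f.IsHomogeneous d)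
    (c : R) (x : σ → R) : eval (c • x) f = c ^ d * eval x f :=
  aeval_smul_of_isHomogeneous hf c x

theorem eval_zero_of_isHomogeneous {f : MvPolynomial σ R} {d : ℕ} (hf : f.IsHomogeneous d)
    (hd : d ≠ 0) : eval 0 f = 0 := by
  simpa [zero_pow hd] using eval_smul_of_isHomogeneous hf 0 0

attribute [local instance] MvPolynomial.gradedAlgebra in
theorem exists_isHomogeneous_eq_mul_of_dvd {l f : MvPolynomial σ R} {i d : ℕ}
    (hl : l.IsHomogeneous i) (hf : f.IsHomogeneous (i + d)) (h : l ∣ f) :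
    ∃ g : MvPolynomial σ R, g.IsHomogeneous d ∧ f = l * g := by
  obtain ⟨g, rfl⟩ := h
  refine ⟨homogeneousComponent d g, homogeneousComponent_isHomogeneous _ _, ?_⟩
  have coe_decompose (p : MvPolynomial σ R) (n : ℕ) :
      (DirectSum.decompose (homogeneousSubmodule σ R) p n : MvPolynomial σ R) =
        homogeneousComponent n p :=
    decomposition.decompose'_apply p n
  rw [← homogeneousComponent_eq_self hf, ← coe_decompose, ← coe_decompose,
    DirectSum.coe_decompose_mul_add_of_left_mem _ hl]

/-- The linear form `∑ i, c i * X i`, as a linear function of its coefficient vector `c`. -/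
def linearForm [Fintype σ] : (σ → R) →ₗ[R] MvPolynomial σ R :=
  Fintype.linearCombination R X

variable [Fintype σ]

theorem linearForm_apply (c : σ → R) : linearForm c = ∑ i, c i • (X i : MvPolynomial σ R) :=
  rfl

@[simp]
theorem linearForm_single [DecidableEq σ] (i : σ) :
    linearForm (Pi.single i (1 : R)) = (X i : MvPolynomial σ R) := by
  simp [linearForm]

@[simp]
theorem aeval_linearForm [CommSemiring A] [Algebra R A] (x : σ → A) (c : σ → R) :
    aeval x (linearForm c) = ∑ i, c i • x i := by
  simp [linearForm_apply]

@[simp]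
theorem eval_linearForm (x c : σ → R) : eval x (linearForm c) = c ⬝ᵥ x := by
  simp [linearForm_apply, dotProduct]

theorem isHomogeneous_linearForm (c : σ → R) : (linearForm c).IsHomogeneous 1 :=
  (homogeneousSubmodule σ R 1).sum_mem fun i _ =>
    Submodule.smul_mem _ _ (isHomogeneous_X R i)

theorem exists_linearForm_eq {l : MvPolynomial σ R} (hl : l.IsHomogeneous 1) :
    ∃ c, linearForm c = l := by
  rwa [← mem_homogeneousSubmodule, homogeneousSubmodule_one_eq_span_X,
    Submodule.mem_span_range_iff_exists_fun] at hl

theorem sum_smul_linearForm_row [DecidableEq σ] {τ : Type*} [Fintype τ] {M : Matrix σ τ R}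
    {N : Matrix τ σ R} (h : M * N = 1) (i : σ) :
    ∑ j, M i j • linearForm (N.row j) = X i := by
  have h_row : ∑ j, M i j • N.row j = Pi.single i 1 := by
    ext k
    simp [← Matrix.one_eq_pi_single, ← h, Matrix.mul_apply]
  simp only [← map_smul, ← map_sum, h_row, linearForm_single]

end Homogeneous

section LineRestriction

variable {σ R : Type*} [CommRing R]

/-- The restriction of polynomials to the parametrised line `T ↦ T Q + P`. -/
def lineRestriction (Q P : σ → R) : MvPolynomial σ R →ₐ[R] Polynomial R :=
  aeval fun i => Polynomial.C (Q i) * Polynomial.X + Polynomial.C (P i)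

theorem aeval_lineRestriction {A : Type*} [CommRing A] [Algebra R A] (Q P : σ → R) (t : A)
    (f : MvPolynomial σ R) :
    Polynomial.aeval t (lineRestriction Q P f) =
      aeval (fun i => t * algebraMap R A (Q i) + algebraMap R A (P i)) f := by
  rw [lineRestriction, ← AlgHom.comp_apply, comp_aeval]
  simp [mul_comm t]

theorem eval_lineRestriction (Q P : σ → R) (t : R) (f : MvPolynomial σ R) :
    (lineRestriction Q P f).eval t = eval (t • Q + P) f :=
  aeval_lineRestriction Q P t f

theorem natDegree_lineRestriction_le {f : MvPolynomial σ R} {d : ℕ} (hf : f.IsHomogeneous d)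
    (Q P : σ → R) : (lineRestriction Q P f).natDegree ≤ d := by
  simpa [lineRestriction] using aeval_natDegree_le f hf.totalDegree_le _
    fun i => Polynomial.natDegree_linear_le (a := Q i) (b := P i)

theorem derivation_aeval {A M : Type*} [Fintype σ] [CommRing A] [Algebra R A] [AddCommGroup M]
    [Module R M] [Module A M] [IsScalarTower R A M] (D : Derivation R A M) (x : σ → A)
    (f : MvPolynomial σ R) :
    D (aeval x f) = ∑ i, aeval x (pderiv i f) • D (x i) := by
  classical
  induction f using MvPolynomial.induction_on with
  | C a => simp
  | add p q hp hq => simp only [map_add, hp, hq, add_smul, Finset.sum_add_distrib]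
  | mul_X p j hp =>
    simp only [map_mul, aeval_X, Derivation.leibniz, hp, pderiv_X, smul_eq_mul, map_add, add_smul,
      Finset.sum_add_distrib, Finset.smul_sum, smul_smul]
    simp [Pi.single_apply]

theorem lineRestriction_linearForm [Fintype σ] (Q P c : σ → R) :
    lineRestriction Q P (linearForm c) =
      Polynomial.C (c ⬝ᵥ Q) * Polynomial.X + Polynomial.C (c ⬝ᵥ P) := by
  simp [lineRestriction, dotProduct, Polynomial.smul_eq_C_mul, Finset.sum_add_distrib,
    Finset.sum_mul, mul_assoc]

theorem reflect_lineRestriction [Finite σ] {f : MvPolynomial σ R} {d : ℕ} (hf : f.IsHomogeneous d)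
    (Q P : σ → R) : (lineRestriction Q P f).reflect d = lineRestriction P Q f := by
  have := Fintype.ofFinite σ
  rw [← mem_homogeneousSubmodule, ← homogeneousSubmodule_one_pow] at hf
  induction hf using Submodule.pow_induction_on_left' with
  | algebraMap r => simp [lineRestriction]
  | add f g i _ _ hf hg => simp only [map_add, Polynomial.reflect_add, hf, hg]
  | mem_mul l hl i g hg ih =>
    have reflect_linear : (lineRestriction Q P l).reflect 1 = lineRestriction P Q l := by
      obtain ⟨c, rfl⟩ := exists_linearForm_eq hl
      simp only [lineRestriction_linearForm, Polynomial.reflect_add, Polynomial.reflect_C_mul,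
        Polynomial.reflect_one_X, Polynomial.reflect_C, mul_one, pow_one]
      exact add_comm _ _
    rw [homogeneousSubmodule_one_pow] at hg
    rw [map_mul, map_mul, Nat.succ_eq_one_add, Polynomial.reflect_mul _ _
      (natDegree_lineRestriction_le hl Q P) (natDegree_lineRestriction_le hg Q P),
      reflect_linear, ih]

theorem coeff_lineRestriction [Finite σ] {f : MvPolynomial σ R} {d : ℕ} (hf : f.IsHomogeneous d)
    (Q P : σ → R) : (lineRestriction Q P f).coeff d = eval Q f := by
  rw [← reflect_lineRestriction hf P Q, Polynomial.coeff_reflect, Polynomial.revAt_le le_rfl,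
    Nat.sub_self, Polynomial.coeff_zero_eq_eval_zero, eval_lineRestriction, zero_smul, zero_add]

theorem natDegree_lineRestriction_le_of_eval_eq_zero [Finite σ] {f : MvPolynomial σ R} {d : ℕ}
    (hf : f.IsHomogeneous (d + 1)) {Q : σ → R} (hQ : eval Q f = 0) (P : σ → R) :
    (lineRestriction Q P f).natDegree ≤ d :=
  Polynomial.natDegree_le_pred (natDegree_lineRestriction_le hf Q P)
    (by rw [coeff_lineRestriction hf, hQ])

variable [Fintype σ]

/-- The differential of `f` at the point `Q`; its kernel is the tangent space of the cone `f = 0`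
at `Q` when `f` is homogeneous and vanishes at `Q`. -/
def differential (f : MvPolynomial σ R) (Q : σ → R) : (σ → R) →ₗ[R] R :=
  ∑ i, eval Q (pderiv i f) • LinearMap.proj i

theorem eval_derivative_lineRestriction (f : MvPolynomial σ R) (Q P : σ → R) (t : R) :
    (lineRestriction Q P f).derivative.eval t = differential f (t • Q + P) Q := by
  have chain_rule := congrArg (Polynomial.eval t) (derivation_aeval Polynomial.derivative'
    (fun i => Polynomial.C (Q i) * Polynomial.X + Polynomial.C (P i)) f)
  simp only [← lineRestriction.eq_1, Polynomial.derivative'_apply] at chain_rule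
  simp [chain_rule, differential, Polynomial.eval_finsetSum, eval_lineRestriction]

theorem coeff_lineRestriction_succ {f : MvPolynomial σ R} {d : ℕ} (hf : f.IsHomogeneous (d + 1))
    (Q P : σ → R) : (lineRestriction Q P f).coeff d = differential f Q P := by
  have h := eval_derivative_lineRestriction f P Q 0
  rw [zero_smul, zero_add, ← Polynomial.coeff_zero_eq_eval_zero, Polynomial.coeff_derivative] at h
  rw [← h, ← reflect_lineRestriction hf P Q, Polynomial.coeff_reflect,
    Polynomial.revAt_le (by lia), d.add_sub_cancel_left]
  simp

theorem natDegree_lineRestriction_le_of_differential_eq_zero {f : MvPolynomial σ R} {d : ℕ}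
    (hf : f.IsHomogeneous (d + 2)) {Q P : σ → R} (hQ : eval Q f = 0)
    (hP : differential f Q P = 0) : (lineRestriction Q P f).natDegree ≤ d :=
  Polynomial.natDegree_le_pred (natDegree_lineRestriction_le_of_eval_eq_zero hf hQ P)
    (by rw [coeff_lineRestriction_succ hf, hP])

end LineRestriction

section LinearFactor

theorem dvd_sub_aeval {σ R : Type*} [CommRing R] {l : MvPolynomial σ R}
    {g : σ → MvPolynomial σ R} (hg : ∀ i, l ∣ X i - g i) (f : MvPolynomial σ R) :
    l ∣ f - aeval g f := by
  induction f using MvPolynomial.induction_on with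
  | C a => simp [algebraMap_eq]
  | add p q hp hq =>
    rw [map_add, add_sub_add_comm]
    exact dvd_add hp hq
  | mul_X p i hp =>
    rw [map_mul, aeval_X, show p * X i - aeval g p * g i =
      (p - aeval g p) * X i + aeval g p * (X i - g i) by ring]
    exact dvd_add (hp.mul_right _) ((hg i).mul_left _)

variable {σ F : Type*} [Field F]

theorem aeval_eq_zero_of_lineRestriction_eq_zero {A : Type*} [CommRing A] [IsDomain A]
    [Algebra F A] {f : MvPolynomial σ F} {d : ℕ} (hf : f.IsHomogeneous d) {Q P : σ → F}
    (h : lineRestriction Q P f = 0) (a : A) {b : A} (hb : b ≠ 0) :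
    aeval (fun i => Q i • a + P i • b) f = 0 := by
  let φ := IsScalarTower.toAlgHom F A (FractionRing A)
  have hφ : Function.Injective φ := IsFractionRing.injective A (FractionRing A)
  have hφb : φ b ≠ 0 := (map_ne_zero_iff φ hφ).2 hb
  -- In the fraction field the point `a Q + b P` is `b` times the point `(a / b) Q + P`.
  have h_point : (fun i => φ (Q i • a + P i • b)) = φ b • fun i =>
      φ a / φ b * algebraMap F (FractionRing A) (Q i) + algebraMap F (FractionRing A) (P i) := by
    ext i
    simp only [map_add, map_smul, Pi.smul_apply, smul_eq_mul]
    simp only [Algebra.smul_def]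
    field_simp
  apply hφ
  rw [← AlgHom.comp_apply, comp_aeval, h_point, aeval_smul_of_isHomogeneous hf,
    ← aeval_lineRestriction, h, map_zero, mul_zero, map_zero]

variable [Fintype σ]

/-- `f` is divisible by a nonzero linear form over its coefficient field. -/
def HasLinearFactor (f : MvPolynomial σ F) : Prop :=
  ∃ c : σ → F, c ≠ 0 ∧ linearForm c ∣ f

theorem HasLinearFactor.exists_eq_mul {f : MvPolynomial σ F} (h : HasLinearFactor f) {d : ℕ}
    (hf : f.IsHomogeneous (d + 1)) :
    ∃ c : σ → F, c ≠ 0 ∧ ∃ g, g.IsHomogeneous d ∧ f = linearForm c * g := by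
  obtain ⟨c, hc, hdvd⟩ := h
  exact ⟨c, hc, exists_isHomogeneous_eq_mul_of_dvd (isHomogeneous_linearForm c)
    (by rwa [add_comm]) hdvd⟩

theorem linearForm_injective : Function.Injective (linearForm (σ := σ) (R := F)) := by
  classical
  refine LinearMap.ker_eq_bot.1 (LinearMap.ker_eq_bot'.2 fun c hc => funext fun i => ?_)
  simpa [hc] using (eval_linearForm (Pi.single i 1) c).symm

theorem HasLinearFactor.of_lineRestriction_eq_zero {f : MvPolynomial (Fin 3) F} {d : ℕ}
    (hf : f.IsHomogeneous d) {Q P : Fin 3 → F} (hQP : LinearIndependent F ![Q, P])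
    (h : lineRestriction Q P f = 0) : HasLinearFactor f := by
  obtain ⟨S, hS⟩ := exists_linearIndependent_cons_of_lt_finrank hQP (by simp)
  let M : Matrix (Fin 3) (Fin 3) F := (Matrix.of ![S, Q, P]).transpose
  have hM : IsUnit M := Matrix.linearIndependent_cols_iff_isUnit.1 hS
  -- `linearForm (M⁻¹.row j)` is the `j`-th coordinate function in the basis `S, Q, P`.
  have coordinate_ne_zero (j) : M⁻¹.row j ≠ 0 :=
    (Matrix.linearIndependent_rows_of_isUnit (Matrix.isUnit_nonsing_inv_iff.2 hM)).ne_zero j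
  have X_eq_sum (i) : X i = S i • linearForm (M⁻¹.row 0) +
      (Q i • linearForm (M⁻¹.row 1) + P i • linearForm (M⁻¹.row 2)) := by
    have h_sum := sum_smul_linearForm_row (M.mul_nonsing_inv (M.isUnit_iff_isUnit_det.1 hM)) i
    rw [← h_sum, Fin.sum_univ_three, add_assoc]
    rfl
  refine ⟨M⁻¹.row 0, coordinate_ne_zero 0, ?_⟩
  have h_dvd := dvd_sub_aeval (l := linearForm (M⁻¹.row 0))
    (g := fun i => Q i • linearForm (M⁻¹.row 1) + P i • linearForm (M⁻¹.row 2))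
    (fun i => by
      rw [X_eq_sum, add_sub_cancel_right]
      exact dvd_smul_of_dvd _ dvd_rfl) f
  rwa [aeval_eq_zero_of_lineRestriction_eq_zero hf h _
    ((map_ne_zero_iff _ linearForm_injective).2 (coordinate_ne_zero 2)), sub_zero] at h_dvd

end LinearFactor

section ProjectiveCount

open scoped LinearAlgebra.Projectivization

variable {F σ V : Type*} [Field F]

/-- The `F`-rational points of the projective hypersurface `f = 0`, for homogeneous `f`. -/
def projZeros (f : MvPolynomial σ F) : Set (ℙ F (σ → F)) :=
  {P | eval P.rep f = 0}

theorem projZeros_mul (f g : MvPolynomial σ F) :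
    projZeros (f * g) = projZeros f ∪ projZeros g := by
  ext P
  simp [projZeros]

variable [Fintype F] [AddCommGroup V] [Module F V] [Finite V]

theorem ncard_cone {S : Set V} (h_zero : 0 ∈ S) (h_smul : ∀ (u : Fˣ), ∀ x ∈ S, u • x ∈ S) :
    S.ncard = {P : ℙ F V | P.rep ∈ S}.ncard * (Fintype.card F - 1) + 1 := by
  classical
  let scale (p : {P : ℙ F V | P.rep ∈ S} × Fˣ) : ↥(S \ {0}) :=
    ⟨p.2 • p.1.1.rep, h_smul _ _ p.1.2, (smul_ne_zero_iff_ne p.2).2 p.1.1.rep_nonzero⟩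
  have h_bijective : Function.Bijective scale := by
    constructor
    · rintro ⟨⟨P, hP⟩, u⟩ ⟨⟨P', hP'⟩, u'⟩ h
      have h_vec : u • P.rep = u' • P'.rep := congrArg Subtype.val h
      obtain rfl : P = P' := by
        rw [← P.mk_rep, ← P'.mk_rep, Projectivization.mk_eq_mk_iff]
        exact ⟨u⁻¹ * u', by rw [mul_smul, ← h_vec, inv_smul_smul]⟩
      obtain rfl : u = u' := Units.ext (smul_left_injective F P.rep_nonzero h_vec)
      rfl
    · rintro ⟨x, hxS, hx0⟩
      obtain ⟨u, hu⟩ := Projectivization.exists_smul_eq_mk_rep F x hx0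
      refine ⟨⟨⟨.mk F x hx0, ?_⟩, u⁻¹⟩, Subtype.ext ?_⟩
      · rw [Set.mem_ofPred_eq, ← hu]
        exact h_smul u x hxS
      · change u⁻¹ • (Projectivization.mk F x hx0).rep = x
        rw [← hu, inv_smul_smul]
  have h_card := Nat.card_congr (Equiv.ofBijective scale h_bijective)
  rw [Nat.card_prod, Nat.card_eq_fintype_card (α := Fˣ), Fintype.card_units, Nat.card_coe_set_eq,
    Nat.card_coe_set_eq] at h_card
  rw [h_card, Set.ncard_sdiff_singleton_add_one h_zero]

theorem ncard_rep_mem_submodule (K : Submodule F V) :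
    {P : ℙ F V | P.rep ∈ K}.ncard * (Fintype.card F - 1) + 1 =
      Fintype.card F ^ Module.finrank F K := by
  rw [← Nat.card_eq_fintype_card (α := F), ← Module.natCard_eq_pow_finrank,
    Nat.card_eq_fintype_card]
  exact (ncard_cone (S := (K : Set V)) K.zero_mem fun u x hx => K.smul_mem (u : F) hx).symm

theorem ncard_eval_eq_zero [Finite σ] {f : MvPolynomial σ F} {d : ℕ} (hf : f.IsHomogeneous d)
    (hd : d ≠ 0) :
    {x | eval x f = 0}.ncard = (projZeros f).ncard * (Fintype.card F - 1) + 1 :=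
  ncard_cone (eval_zero_of_isHomogeneous hf hd) fun u x (hx : eval x f = 0) => by
    change eval ((u : F) • x) f = 0
    rw [eval_smul_of_isHomogeneous hf, hx, mul_zero]

theorem ncard_iInter_projZeros_linearForm {ι : Type*} [Fintype σ] (c : ι → σ → F) :
    (⋂ i, projZeros (linearForm (c i))).ncard * (Fintype.card F - 1) + 1 =
      Fintype.card F ^ (Fintype.card σ - (Matrix.of c).rank) := by
  have h_zeros : ⋂ i, projZeros (linearForm (c i)) =
      {P : ℙ F (σ → F) | P.rep ∈ LinearMap.ker (Matrix.of c).mulVecLin} := by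
    ext P
    simp [projZeros, funext_iff, Matrix.mulVec]
  have rank_nullity := (Matrix.of c).mulVecLin.finrank_range_add_finrank_ker
  rw [Module.finrank_fintype_fun_eq_card] at rank_nullity
  rw [h_zeros, ncard_rep_mem_submodule, Matrix.rank, ← rank_nullity, Nat.add_sub_cancel_left]

theorem ncard_projZeros_linearForm {c : Fin 3 → F} (hc : c ≠ 0) :
    (projZeros (linearForm c)).ncard = Fintype.card F + 1 := by
  have h_rank : (Matrix.of fun _ : Unit => c).rank = 1 := by
    have h_independent : LinearIndependent F (Matrix.of fun _ : Unit => c).row :=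
      .of_subsingleton () hc
    rw [h_independent.rank_matrix, Fintype.card_unit]
  have h_count := ncard_iInter_projZeros_linearForm fun _ : Unit => c
  rw [h_rank, Set.iInter_const, Fintype.card_fin] at h_count
  have h_sq : Fintype.card F ^ 2 = (Fintype.card F + 1) * (Fintype.card F - 1) + 1 := by
    obtain ⟨m, hm⟩ := Nat.exists_eq_add_of_lt (Fintype.one_lt_card (α := F))
    simp only [hm, Nat.add_sub_cancel]
    ring
  exact Nat.eq_of_mul_eq_mul_right (Nat.sub_pos_of_lt Fintype.one_lt_card)
    (Nat.succ_injective (h_count.trans h_sq))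

theorem ncard_projZeros_linearForm_inter (c c' : Fin 3 → F) :
    (projZeros (linearForm c) ∩ projZeros (linearForm c')).ncard * (Fintype.card F - 1) + 1 =
      Fintype.card F ^ (3 - (Matrix.of ![c, c']).rank) := by
  have h_inter : ⋂ i, projZeros (linearForm (![c, c'] i)) =
      projZeros (linearForm c) ∩ projZeros (linearForm c') := by
    ext
    simp
  rw [← h_inter, ncard_iInter_projZeros_linearForm, Fintype.card_fin]

theorem ncard_projZeros_linearForm_mul_le {c c' : Fin 3 → F} (hc : c ≠ 0) (hc' : c' ≠ 0) :
    (projZeros (linearForm c * linearForm c')).ncard ≤ 2 * Fintype.card F + 1 := by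
  have h_inter : (projZeros (linearForm c) ∩ projZeros (linearForm c')).ncard ≠ 0 := by
    intro h_empty
    have h_pow := ncard_projZeros_linearForm_inter c c'
    rw [h_empty, zero_mul, zero_add, eq_comm, Nat.pow_eq_one] at h_pow
    have h_rank := (Matrix.of ![c, c']).rank_le_height
    have h_card := Fintype.one_lt_card (α := F)
    lia
  have h_union := Set.ncard_union_add_ncard_inter (projZeros (linearForm c))
    (projZeros (linearForm c'))
  rw [ncard_projZeros_linearForm hc, ncard_projZeros_linearForm hc', ← projZeros_mul] at h_union
  lia

theorem ncard_projZeros_linearForm_mul {c c' : Fin 3 → F} (h : LinearIndependent F ![c, c']) :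
    (projZeros (linearForm c * linearForm c')).ncard = 2 * Fintype.card F + 1 := by
  have h_inter : (projZeros (linearForm c) ∩ projZeros (linearForm c')).ncard = 1 := by
    have h_rank : (Matrix.of ![c, c']).rank = 2 := LinearIndependent.rank_matrix h
    have h_pow := ncard_projZeros_linearForm_inter c c'
    obtain ⟨m, hm⟩ := Nat.exists_eq_add_of_lt (Fintype.one_lt_card (α := F))
    rw [h_rank, pow_one, hm, Nat.add_sub_cancel] at h_pow
    exact Nat.eq_of_mul_eq_mul_right (Nat.succ_pos m) (by lia)
  have h_union := Set.ncard_union_add_ncard_inter (projZeros (linearForm c))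
    (projZeros (linearForm c'))
  rw [ncard_projZeros_linearForm (c := c) (h.ne_zero 0),
    ncard_projZeros_linearForm (c := c') (h.ne_zero 1), h_inter, ← projZeros_mul] at h_union
  lia

end ProjectiveCount

section Pencil

theorem setOf_eval_eq_zero {R : Type*} [CommRing R] [IsDomain R] [DecidableEq R]
    {p : Polynomial R} (hp : p ≠ 0) : {t | p.eval t = 0} = (p.roots.toFinset : Set R) := by
  ext t
  simp [Polynomial.mem_roots hp]

theorem eval_derivative_ne_zero_of_natDegree_le_ncard {R : Type*} [CommRing R] [IsDomain R]
    {p : Polynomial R} (hp : p ≠ 0) (h : p.natDegree ≤ {t | p.eval t = 0}.ncard) {t : R}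
    (ht : p.eval t = 0) : p.derivative.eval t ≠ 0 := by
  classical
  rw [setOf_eval_eq_zero hp, Set.ncard_coe_finset] at h
  have nodup_roots : p.roots.Nodup := Multiset.toFinset_card_eq_card_iff_nodup.1
    ((Multiset.toFinset_card_le _).antisymm ((Polynomial.card_roots' p).trans h))
  intro h_derivative
  have h_multiple := (Polynomial.one_lt_rootMultiplicity_iff_isRoot hp).2 ⟨ht, h_derivative⟩
  rw [← Polynomial.count_roots] at h_multiple
  exact h_multiple.not_ge (Multiset.nodup_iff_count_le_one.1 nodup_roots t)

open scoped Classical in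
/-- The number of zeros of `f` on the line through `Q` and `P` other than `Q` itself, where `Q` is
counted once if the line is tangent to `f = 0` at `Q`. -/
def pencilCount {σ F : Type*} [Field F] [Fintype σ] (f : MvPolynomial σ F) (Q P : σ → F) : ℕ :=
  {t : F | eval (t • Q + P) f = 0}.ncard + if differential f Q P = 0 then 1 else 0

theorem ncard_lineZeros_le_natDegree {σ F : Type*} [Field F] {f : MvPolynomial σ F} {Q P : σ → F}
    (h : lineRestriction Q P f ≠ 0) :
    {t : F | eval (t • Q + P) f = 0}.ncard ≤ (lineRestriction Q P f).natDegree := by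
  simp_rw [← eval_lineRestriction]
  classical
  rw [setOf_eval_eq_zero h, Set.ncard_coe_finset]
  exact (Multiset.toFinset_card_le _).trans (Polynomial.card_roots' _)

theorem pencilCount_le {F : Type*} [Field F] {f : MvPolynomial (Fin 3) F} {e : ℕ}
    (hf : f.IsHomogeneous (e + 2)) (h_factor : ¬HasLinearFactor f) {Q P : Fin 3 → F}
    (hQ : eval Q f = 0) (hQP : LinearIndependent F ![Q, P]) : pencilCount f Q P ≤ e + 1 := by
  have h_roots := ncard_lineZeros_le_natDegree fun h =>
    h_factor (.of_lineRestriction_eq_zero hf hQP h)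
  rw [pencilCount]
  split_ifs with h_tangent
  · exact Nat.succ_le_succ
      (h_roots.trans (natDegree_lineRestriction_le_of_differential_eq_zero hf hQ h_tangent))
  · exact h_roots.trans (natDegree_lineRestriction_le_of_eval_eq_zero hf hQ P)

theorem ncard_lineZeros_swap_le {σ F : Type*} [Field F] [Finite F] {f : MvPolynomial σ F} {d : ℕ}
    (hf : f.IsHomogeneous d) {Q P : σ → F} {t : F} (ht : eval (t • Q + P) f = 0) :
    {s : F | eval (s • (t • Q + P) + Q) f = 0}.ncard ≤ {s : F | eval (s • Q + P) f = 0}.ncard := by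
  -- `s (tQ + P) + Q` and `(t + s⁻¹) Q + P` are proportional for `s ≠ 0`, and `0⁻¹ = 0`.
  refine Set.ncard_le_ncard_of_injOn (fun s => t + s⁻¹) (fun s (hs : eval _ f = 0) => ?_)
    fun s _ s' _ h => inv_injective (add_left_cancel h)
  change eval ((t + s⁻¹) • Q + P) f = 0
  obtain rfl | h_ne := eq_or_ne s 0
  · simpa using ht
  have h_point : s • (t • Q + P) + Q = s • ((t + s⁻¹) • Q + P) := by
    rw [add_smul, smul_add, smul_add, smul_add, smul_inv_smul₀ h_ne]
    abel
  rw [h_point, eval_smul_of_isHomogeneous hf] at hs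
  exact (mul_eq_zero.1 hs).resolve_left (pow_ne_zero _ h_ne)

theorem differential_self {σ F : Type*} [Field F] [Fintype σ] {f : MvPolynomial σ F} {d : ℕ}
    (hf : f.IsHomogeneous d) {Q : σ → F} (hQ : eval Q f = 0) : differential f Q Q = 0 := by
  simpa [differential, hQ, mul_comm] using congrArg (eval Q) hf.sum_X_mul_pderiv

open Finset

variable {σ F : Type*} [Field F] [Fintype F] [Fintype σ]

open scoped Classical in
/-- The vectors `P` that span a line together with the point `Q`. -/
def directions (Q : σ → F) : Finset (σ → F) :=
  {P | LinearIndependent F ![Q, P]}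

theorem mem_directions {Q P : σ → F} : P ∈ directions Q ↔ LinearIndependent F ![Q, P] := by
  simp [directions]

theorem smul_add_mem_directions_iff {Q P : σ → F} (t : F) :
    t • Q + P ∈ directions Q ↔ P ∈ directions Q := by
  rw [mem_directions, mem_directions, LinearIndependent.pair_add_smul_right_iff]

theorem card_filter_directions_add {Q : σ → F} (hQ : Q ≠ 0) {p : (σ → F) → Prop}
    [DecidablePred p] (hp : ∀ a : F, p (a • Q)) :
    #{P ∈ directions Q | p P} + Fintype.card F = {P | p P}.ncard := by
  have h_directions : (({P ∈ directions Q | p P} : Finset (σ → F)) : Set (σ → F)) =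
      {P | p P} \ Set.range fun a : F => a • Q := by
    ext P
    simp [mem_directions, LinearIndependent.pair_iff' hQ, and_comm]
  rw [← Set.ncard_coe_finset, h_directions, ← Nat.card_eq_fintype_card,
    ← Set.ncard_range_of_injective (smul_left_injective F hQ)]
  exact Set.ncard_sdiff_add_ncard_of_subset (Set.range_subset_iff.2 hp)

theorem card_directions_add {Q : σ → F} (hQ : Q ≠ 0) :
    #(directions Q) + Fintype.card F = Fintype.card F ^ Fintype.card σ := by
  classical
  simpa [Set.ncard_univ] using card_filter_directions_add hQ (p := fun _ => True) fun _ => trivial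

theorem le_card_tangent_directions_add [DecidableEq F] {f : MvPolynomial σ F} {d : ℕ}
    (hf : f.IsHomogeneous d) {Q : σ → F} (hQ : Q ≠ 0) (hfQ : eval Q f = 0) :
    Fintype.card F ^ (Fintype.card σ - 1) ≤
      #{P ∈ directions Q | differential f Q P = 0} + Fintype.card F := by
  let T := LinearMap.ker (differential f Q)
  have finrank_T : Fintype.card σ - 1 ≤ Module.finrank F T := by
    have rank_nullity := (differential f Q).finrank_range_add_finrank_ker
    have finrank_range_le := Submodule.finrank_le (LinearMap.range (differential f Q))
    rw [Module.finrank_fintype_fun_eq_card] at rank_nullity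
    rw [Module.finrank_self] at finrank_range_le
    exact Nat.sub_le_of_le_add (by linarith)
  have card_T : {P | differential f Q P = 0}.ncard = Fintype.card F ^ Module.finrank F T := by
    rw [← Nat.card_eq_fintype_card, ← Module.natCard_eq_pow_finrank, ← Nat.card_coe_set_eq]
    rfl
  rw [card_filter_directions_add hQ fun a => by simp [differential_self hf hfQ], card_T]
  exact Nat.pow_le_pow_right Fintype.card_pos finrank_T

theorem sum_ncard_lineZeros [DecidableEq F] (f : MvPolynomial σ F) (Q : σ → F) :
    ∑ P ∈ directions Q, {t : F | eval (t • Q + P) f = 0}.ncard =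
      Fintype.card F * #{P ∈ directions Q | eval P f = 0} := by
  have h_translate (t : F) : #{P ∈ directions Q | eval (t • Q + P) f = 0} =
      #{P ∈ directions Q | eval P f = 0} :=
    card_equiv (Equiv.addLeft (t • Q)) fun P => by simp [smul_add_mem_directions_iff]
  simp_rw [Set.ncard_eq_toFinset_card', Set.toFinset_ofPred]
  have h_swap := sum_card_bipartiteAbove_eq_sum_card_bipartiteBelow (s := directions Q)
    (t := univ) fun P (t : F) => eval (t • Q + P) f = 0
  simpa [bipartiteAbove, bipartiteBelow, h_translate] using h_swap

theorem le_sum_pencilCount {f : MvPolynomial (Fin 3) F} {d : ℕ} (hf : f.IsHomogeneous d)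
    (hd : d ≠ 0) {Q : Fin 3 → F} (hQ : Q ≠ 0) (hfQ : eval Q f = 0) :
    (projZeros f).ncard * (Fintype.card F * (Fintype.card F - 1)) ≤
      ∑ P ∈ directions Q, pencilCount f Q P := by
  classical
  have h_tangent := le_card_tangent_directions_add hf hQ hfQ
  have h_zeros := card_filter_directions_add hQ (p := fun P => eval P f = 0)
    fun a => by rw [eval_smul_of_isHomogeneous hf, hfQ, mul_zero]
  rw [ncard_eval_eq_zero hf hd] at h_zeros
  simp only [pencilCount, sum_add_distrib, ← card_filter, sum_ncard_lineZeros]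
  obtain ⟨m, hm⟩ := Nat.exists_eq_add_of_lt (Fintype.one_lt_card (α := F))
  rw [hm, Nat.add_sub_cancel] at h_zeros ⊢
  rw [hm, Fintype.card_fin, show 3 - 1 = 2 from rfl] at h_tangent
  have h_scaled := congrArg ((1 + m + 1) * ·) h_zeros
  linarith

theorem card_directions {Q : Fin 3 → F} (hQ : Q ≠ 0) :
    #(directions Q) = (Fintype.card F + 1) * (Fintype.card F * (Fintype.card F - 1)) := by
  have h := card_directions_add hQ
  obtain ⟨m, hm⟩ := Nat.exists_eq_add_of_lt (Fintype.one_lt_card (α := F))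
  simp only [hm, Fintype.card_fin, Nat.add_sub_cancel] at *
  linarith

theorem ncard_projZeros_le {f : MvPolynomial (Fin 3) F} {e : ℕ} (hf : f.IsHomogeneous (e + 2))
    (h_factor : ¬HasLinearFactor f) :
    (projZeros f).ncard ≤ (e + 1) * (Fintype.card F + 1) := by
  obtain h_empty | ⟨Q, hfQ : eval Q.rep f = 0⟩ := (projZeros f).eq_empty_or_nonempty
  · simp [h_empty]
  have h_sum : ∑ P ∈ directions Q.rep, pencilCount f Q.rep P ≤ #(directions Q.rep) * (e + 1) :=
    sum_le_card_nsmul _ _ _ fun P hP => pencilCount_le hf h_factor hfQ (mem_directions.1 hP)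
  rw [card_directions Q.rep_nonzero] at h_sum
  have h_pos : 0 < Fintype.card F * (Fintype.card F - 1) :=
    Nat.mul_pos Fintype.card_pos (Nat.sub_pos_of_lt Fintype.one_lt_card)
  refine Nat.le_of_mul_le_mul_right ?_ h_pos
  calc (projZeros f).ncard * (Fintype.card F * (Fintype.card F - 1))
      ≤ ∑ P ∈ directions Q.rep, pencilCount f Q.rep P :=
        le_sum_pencilCount hf (by lia) Q.rep_nonzero hfQ
    _ ≤ _ := h_sum
    _ = (e + 1) * (Fintype.card F + 1) * (Fintype.card F * (Fintype.card F - 1)) := by ring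

theorem pencilCount_eq {f : MvPolynomial (Fin 3) F} {e : ℕ} (hf : f.IsHomogeneous (e + 2))
    (h_factor : ¬HasLinearFactor f)
    (h_max : (projZeros f).ncard = (e + 1) * (Fintype.card F + 1)) {Q P : Fin 3 → F}
    (hfQ : eval Q f = 0) (hQP : LinearIndependent F ![Q, P]) : pencilCount f Q P = e + 1 := by
  have hQ : Q ≠ 0 := hQP.ne_zero 0
  have h_le : ∀ P ∈ directions Q, pencilCount f Q P ≤ e + 1 := fun P hP =>
    pencilCount_le hf h_factor hfQ (mem_directions.1 hP)
  have h_sum : ∑ P ∈ directions Q, (e + 1) ≤ ∑ P ∈ directions Q, pencilCount f Q P := by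
    calc ∑ P ∈ directions Q, (e + 1)
        = (projZeros f).ncard * (Fintype.card F * (Fintype.card F - 1)) := by
          rw [sum_const, smul_eq_mul, card_directions hQ, h_max]
          ring
      _ ≤ _ := le_sum_pencilCount hf (by lia) hQ hfQ
  exact (sum_eq_sum_iff_of_le h_le).1 ((sum_le_sum h_le).antisymm h_sum) P (mem_directions.2 hQP)

theorem ncard_projZeros_lt {f : MvPolynomial (Fin 3) F} {e : ℕ} (hf : f.IsHomogeneous (e + 2))
    (he : e ≠ 0) (h_factor : ¬HasLinearFactor f) :
    (projZeros f).ncard < (e + 1) * (Fintype.card F + 1) := by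
  classical
  refine (ncard_projZeros_le hf h_factor).lt_of_ne fun h_max => ?_
  obtain ⟨Q, hfQ : eval Q.rep f = 0⟩ : (projZeros f).Nonempty :=
    Set.nonempty_of_ncard_ne_zero (by rw [h_max]; positivity)
  obtain ⟨P, hP⟩ : {P ∈ directions Q.rep | differential f Q.rep P = 0}.Nonempty := by
    have h_card := le_card_tangent_directions_add hf Q.rep_nonzero hfQ
    have h_one_lt := Fintype.one_lt_card (α := F)
    rw [← card_pos]
    simp only [Fintype.card_fin, Nat.add_one_sub_one] at h_card
    nlinarith
  rw [mem_filter, mem_directions] at hP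
  obtain ⟨hQP, h_tangent⟩ := hP
  have h_count : {s : F | eval (s • Q.rep + P) f = 0}.ncard = e := by
    simpa [pencilCount, h_tangent] using pencilCount_eq hf h_factor h_max hfQ hQP
  obtain ⟨t, ht⟩ := Set.nonempty_of_ncard_ne_zero (h_count.trans_ne he)
  -- The `e` zeros on the tangent line at `Q` are simple, so this line is not tangent at another
  -- zero `t Q + P` of `f`, and seen from there it carries `e + 1` further zeros.
  have h_transversal : differential f (t • Q.rep + P) Q.rep ≠ 0 := by
    rw [← eval_derivative_lineRestriction]
    refine eval_derivative_ne_zero_of_natDegree_le_ncard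
      (fun h => h_factor (.of_lineRestriction_eq_zero hf hQP h)) ?_
      ((eval_lineRestriction _ _ _ _).trans ht)
    simp_rw [eval_lineRestriction, h_count]
    exact natDegree_lineRestriction_le_of_differential_eq_zero hf hfQ h_tangent
  have h_swap := pencilCount_eq hf h_factor h_max (P := Q.rep) ht (by
    rwa [LinearIndependent.pair_symm_iff, LinearIndependent.pair_add_smul_right_iff])
  rw [pencilCount, if_neg h_transversal, add_zero] at h_swap
  exact (ncard_lineZeros_swap_le hf ht).not_gt (by lia)

end Pencil

section QuarticThroughPoint

variable {F A : Type*} [Field F] [CommRing A] [Algebra F A]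

theorem aeval_linearForm_ne_zero {σ : Type*} [Fintype σ] {v : σ → A}
    (hv : LinearIndependent F v) {c : σ → F} (hc : c ≠ 0) : aeval v (linearForm c) ≠ 0 := by
  rw [aeval_linearForm]
  exact fun h => hc (funext (Fintype.linearIndependent_iff.1 hv c h))

theorem not_hasLinearFactor_of_aeval_eq_zero [IsDomain A] {σ : Type*} [Fintype σ] {v : σ → A}
    (hv : LinearIndependent F v) {f : MvPolynomial σ F} (hf : f.IsHomogeneous 2) (hf0 : f ≠ 0)
    (hfv : aeval v f = 0) : ¬HasLinearFactor f := by
  intro h_factor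
  obtain ⟨c, hc, l, hl, rfl⟩ := h_factor.exists_eq_mul hf
  obtain ⟨c', rfl⟩ := exists_linearForm_eq hl
  have hc' : c' ≠ 0 := by
    rintro rfl
    simp at hf0
  rw [map_mul] at hfv
  exact mul_ne_zero (aeval_linearForm_ne_zero hv hc) (aeval_linearForm_ne_zero hv hc') hfv

theorem aeval_eq_zero_of_linearForm_mul [IsDomain A] {σ : Type*} [Fintype σ] {v : σ → A}
    (hv : LinearIndependent F v) {c : σ → F} (hc : c ≠ 0) {g : MvPolynomial σ F}
    (h : aeval v (linearForm c * g) = 0) : aeval v g = 0 := by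
  rw [map_mul] at h
  exact (mul_eq_zero.1 h).resolve_left (aeval_linearForm_ne_zero hv hc)

theorem ncard_projZeros_mul_le {σ : Type*} [Finite σ] [Finite F] (f g : MvPolynomial σ F) :
    (projZeros (f * g)).ncard ≤ (projZeros f).ncard + (projZeros g).ncard := by
  rw [projZeros_mul]
  exact Set.ncard_union_le _ _

theorem ncard_projZeros_le_of_aeval_eq_zero [IsDomain A] [Fintype F] {v : Fin 3 → A}
    (hv : LinearIndependent F v) {f : MvPolynomial (Fin 3) F} (hf : f.IsHomogeneous 4)
    (hf0 : f ≠ 0) (hfv : aeval v f = 0) : (projZeros f).ncard ≤ 3 * Fintype.card F + 2 := by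
  by_cases hf_factor : HasLinearFactor f
  case neg => exact Nat.le_of_lt_succ (ncard_projZeros_lt hf two_ne_zero hf_factor)
  obtain ⟨c, hc, g, hg, rfl⟩ := hf_factor.exists_eq_mul hf
  by_cases hg_factor : HasLinearFactor g
  case neg =>
    have h_union := ncard_projZeros_mul_le (linearForm c) g
    have h_line := ncard_projZeros_linearForm hc
    have h_cubic := ncard_projZeros_lt hg one_ne_zero hg_factor
    lia
  obtain ⟨c', hc', h, hh, rfl⟩ := hg_factor.exists_eq_mul hg
  have h_factor : ¬HasLinearFactor h :=
    not_hasLinearFactor_of_aeval_eq_zero hv hh (right_ne_zero_of_mul (right_ne_zero_of_mul hf0))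
      (aeval_eq_zero_of_linearForm_mul hv hc' (aeval_eq_zero_of_linearForm_mul hv hc hfv))
  have h_union := ncard_projZeros_mul_le (linearForm c * linearForm c') h
  have h_lines := ncard_projZeros_linearForm_mul_le hc hc'
  have h_conic := ncard_projZeros_le (e := 0) hh h_factor
  rw [← mul_assoc]
  lia

end QuarticThroughPoint

section Dimension

theorem finrank_homogeneousSubmodule (σ R : Type*) [Fintype σ] [CommRing R] [Nontrivial R]
    (d : ℕ) :
    Module.finrank R (homogeneousSubmodule σ R d) = (Fintype.card σ + d - 1).choose d := by
  classical
  have h_monomials : {m : σ →₀ ℕ | m.degree = d} =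
      (Finset.univ.finsuppAntidiag d : Finset (σ →₀ ℕ)) := by
    ext m
    simp [Finsupp.degree_eq_sum]
  rw [homogeneousSubmodule_eq_finsupp_supported, ← restrictSupport.eq_1,
    Module.finrank_eq_nat_card_basis (basisRestrictSupport R {m : σ →₀ ℕ | m.degree = d}),
    h_monomials, Nat.card_coe_set_eq, Set.ncard_coe_finset,
    Finset.card_finsuppAntidiag_nat_eq_choose, Finset.card_univ]

theorem finrank_map_add_finrank_inf_ker {K V W : Type*} [DivisionRing K] [AddCommGroup V]
    [Module K V] [AddCommGroup W] [Module K W] (f : V →ₗ[K] W) (S : Submodule K V)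
    [FiniteDimensional K S] :
    Module.finrank K (S.map f) + Module.finrank K (S ⊓ LinearMap.ker f : Submodule K V) =
      Module.finrank K S := by
  rw [← (f.domRestrict S).finrank_range_add_finrank_ker, LinearMap.range_domRestrict,
    LinearMap.ker_domRestrict, ← Submodule.map_comap_subtype, Submodule.finrank_map_subtype_eq]

theorem map_aeval_homogeneousSubmodule_eq_top {σ R A : Type*} [Finite σ] [CommSemiring R]
    [CommSemiring A] [Algebra R A] {v : σ → A} (hv : Submodule.span R (Set.range v) = ⊤) (d : ℕ) :
    (homogeneousSubmodule σ R (d + 1)).map (aeval v).toLinearMap = ⊤ := by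
  have := Fintype.ofFinite σ
  have exists_linearForm (y : A) : ∃ c : σ → R, aeval v (linearForm c) = y := by
    have hy : y ∈ Submodule.span R (Set.range v) := hv ▸ Submodule.mem_top
    simpa using (Submodule.mem_span_range_iff_exists_fun R).1 hy
  refine Submodule.eq_top_iff'.2 fun y => ?_
  obtain ⟨c, hc⟩ := exists_linearForm 1
  obtain ⟨c', hc'⟩ := exists_linearForm y
  refine ⟨linearForm c ^ d * linearForm c', ?_, by simp [hc, hc']⟩
  simpa using ((isHomogeneous_linearForm c).pow d).mul (isHomogeneous_linearForm c')

variable {F E σ : Type*} [Field F] [Field E] [Algebra F E]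

variable (F) in
/-- The space of forms of degree `d` over `F` that vanish at the point `v` over the extension `E`
of `F`. -/
abbrev formsThrough (v : σ → E) (d : ℕ) : Submodule F (MvPolynomial σ F) :=
  homogeneousSubmodule σ F d ⊓ LinearMap.ker (aeval (R := F) v).toLinearMap

theorem finrank_formsThrough [Fintype σ] {v : σ → E} (hv : Submodule.span F (Set.range v) = ⊤)
    (d : ℕ) :
    Module.finrank F E + Module.finrank F (formsThrough F v (d + 1)) =
      (Fintype.card σ + d).choose (d + 1) := by
  have : FiniteDimensional F (homogeneousSubmodule σ F (d + 1)) :=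
    Module.Finite.of_fg (homogeneousSubmodule_fg σ F (d + 1))
  have h := finrank_map_add_finrank_inf_ker (aeval (R := F) v).toLinearMap
    (homogeneousSubmodule σ F (d + 1))
  rwa [map_aeval_homogeneousSubmodule_eq_top hv, finrank_top, finrank_homogeneousSubmodule] at h

theorem linearIndependent_of_linearIndependent_conjugates [Finite σ]
    (φ : σ → E →ₗ[F] E) {v : σ → E} (h : LinearIndependent E fun j i => φ j (v i)) :
    LinearIndependent F v := by
  classical
  have := Fintype.ofFinite σ
  have h_cols : LinearIndependent E (Matrix.of fun j i => φ j (v i)).col :=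
    Matrix.linearIndependent_cols_iff_isUnit.2 (Matrix.linearIndependent_rows_iff_isUnit.1 h)
  exact LinearIndependent.of_comp (LinearMap.pi φ) (h_cols.restrict_scalars' F)

end Dimension

section Extremal

theorem one_lt_ncard_rootFree {F : Type*} [CommRing F] [Fintype F] (hF : 3 ≤ Fintype.card F) :
    1 < {p : F × F | ∀ t, p.1 + p.2 * t + t ^ 2 ≠ 0}.ncard := by
  classical
  -- The quadratics with a root are the `(T - r) * (T - s)`, at most one per unordered pair.
  let ofRoots : Sym2 F → F × F :=
    Sym2.lift ⟨fun r s => (r * s, -(r + s)), fun r s => by simp only [mul_comm, add_comm]⟩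
  have compl_subset : {p : F × F | ∀ t, p.1 + p.2 * t + t ^ 2 ≠ 0}ᶜ ⊆ Set.range ofRoots := by
    rintro ⟨c, b⟩ h
    simp only [Set.mem_compl_iff, Set.mem_ofPred_eq, not_forall, not_not] at h
    obtain ⟨t, ht⟩ := h
    refine ⟨s(t, -b - t), Prod.ext ?_ ?_⟩
    · change t * (-b - t) = c
      linear_combination -ht
    · change -(t + (-b - t)) = b
      ring
  have compl_le : 2 * {p : F × F | ∀ t, p.1 + p.2 * t + t ^ 2 ≠ 0}ᶜ.ncard ≤
      (Fintype.card F + 1) * Fintype.card F := by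
    have h := (Set.ncard_le_ncard compl_subset).trans_eq (Nat.card_coe_set_eq _).symm
    have h_sym2 := h.trans (Finite.card_range_le ofRoots)
    rw [Nat.card_eq_fintype_card, Sym2.card, Nat.choose_two_right] at h_sym2
    exact (Nat.mul_le_mul_left 2 h_sym2).trans (Nat.mul_div_le _ 2)
  have h_add := Set.ncard_add_ncard_compl {p : F × F | ∀ t, p.1 + p.2 * t + t ^ 2 ≠ 0}
  rw [Nat.card_prod, Nat.card_eq_fintype_card] at h_add
  nlinarith

section ChangeOfCoordinates

variable {F σ : Type*} [Field F] [Fintype σ] [DecidableEq σ]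

theorem ncard_projZeros_aeval_linearForm [Finite F] {f : MvPolynomial σ F} {d : ℕ}
    (hf : f.IsHomogeneous d) (hd : d ≠ 0) {B : Matrix σ σ F} (hB : IsUnit B) :
    (projZeros (aeval (fun i => linearForm (B.row i)) f)).ncard = (projZeros f).ncard := by
  have := Fintype.ofFinite F
  have hf_subst : (aeval (fun i => linearForm (B.row i)) f).IsHomogeneous d := by
    simpa using hf.aeval _ fun i => isHomogeneous_linearForm (B.row i)
  have h_eval (x : σ → F) :
      eval x (aeval (fun i => linearForm (B.row i)) f) = eval (B.mulVec x) f := by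
    change aeval x (aeval (fun i => linearForm (B.row i)) f) = aeval (B.mulVec x) f
    rw [← AlgHom.comp_apply, comp_aeval]
    simp only [aeval_linearForm]
    rfl
  have h_ncard : {x | eval x (aeval (fun i => linearForm (B.row i)) f) = 0}.ncard =
      {x | eval x f = 0}.ncard := by
    simp_rw [h_eval]
    exact Set.ncard_preimage_of_injective_subset_range (s := {x | eval x f = 0})
      (Matrix.mulVec_injective_of_isUnit hB)
      ((Matrix.mulVec_surjective_iff_isUnit.2 hB).range_eq ▸ Set.subset_univ _)
  rw [ncard_eval_eq_zero hf hd, ncard_eval_eq_zero hf_subst hd] at h_ncard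
  exact Nat.eq_of_mul_eq_mul_right (Nat.sub_pos_of_lt Fintype.one_lt_card)
    (Nat.succ_injective h_ncard)

theorem exists_isUnit_aeval_linearForm_eq {A : Type*} [CommRing A] [Algebra F A]
    (b w : Module.Basis σ F A) :
    ∃ B : Matrix σ σ F, IsUnit B ∧ ∀ i, aeval b (linearForm (B.row i)) = w i := by
  let _ := b.invertibleToMatrix w
  refine ⟨(b.toMatrix w).transpose, ?_, fun i => ?_⟩
  · rw [Matrix.isUnit_transpose]
    exact isUnit_of_invertible _
  · rw [aeval_linearForm]
    exact b.sum_toMatrix_smul_self w i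

end ChangeOfCoordinates

variable {F : Type*} [Field F]

variable (F) in
/-- The equation of the conic `x₀ x₂ = x₁²`, whose points are `(1 : t : t²)` and `(0 : 0 : 1)`. -/
def conic : MvPolynomial (Fin 3) F :=
  X 1 ^ 2 - X 0 * X 2

theorem isHomogeneous_conic : (conic F).IsHomogeneous 2 :=
  ((isHomogeneous_X F 1).pow 2).sub ((isHomogeneous_X F 0).mul (isHomogeneous_X F 2))

theorem eval_conic_eq_zero_iff {x : Fin 3 → F} : eval x (conic F) = 0 ↔ x 1 ^ 2 = x 0 * x 2 := by
  simp [conic, sub_eq_zero]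

theorem ncard_eval_conic_eq_zero [Fintype F] :
    {x | eval x (conic F) = 0}.ncard = Fintype.card F * Fintype.card F := by
  classical
  let cone (p : F × F) : Fin 3 → F :=
    if p.1 = 0 then ![0, 0, p.2] else ![p.1, p.1 * p.2, p.1 * p.2 ^ 2]
  have cone_fst (p : F × F) : cone p 0 = p.1 := by
    by_cases hp : p.1 = 0 <;> simp [cone, hp]
  have injective_cone : Function.Injective cone := by
    rintro ⟨a, t⟩ ⟨a', t'⟩ h
    obtain rfl : a = a' := by simpa only [cone_fst] using congrFun h 0
    obtain rfl | ha := eq_or_ne a 0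
    · simpa [cone] using congrFun h 2
    · simpa [cone, ha] using congrFun h 1
  have range_cone : Set.range cone = {x | eval x (conic F) = 0} := by
    ext x
    rw [Set.mem_ofPred_eq, eval_conic_eq_zero_iff]
    constructor
    · rintro ⟨⟨a, t⟩, rfl⟩
      obtain rfl | ha := eq_or_ne a 0
      · simp [cone]
      · simp only [cone, ha, if_false, Matrix.cons_val]
        ring
    · intro hx
      obtain hx0 | hx0 := eq_or_ne (x 0) 0
      · have hx1 : x 1 = 0 := by simpa [hx0] using hx
        exact ⟨(0, x 2), by ext i; fin_cases i <;> simp [cone, hx0, hx1]⟩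
      · have hx2 : x 0 * (x 1 / x 0) ^ 2 = x 2 := by
          field_simp
          exact hx
        exact ⟨(x 0, x 1 / x 0), by
          ext i; fin_cases i <;> simp [cone, hx0, hx2, mul_div_cancel₀]⟩
  rw [← range_cone, Set.ncard_range_of_injective injective_cone, Nat.card_prod,
    Nat.card_eq_fintype_card]

theorem ncard_projZeros_conic [Fintype F] : (projZeros (conic F)).ncard = Fintype.card F + 1 := by
  have h_ncard := ncard_eval_conic_eq_zero (F := F)
  rw [ncard_eval_eq_zero isHomogeneous_conic two_ne_zero] at h_ncard
  obtain ⟨m, hm⟩ := Nat.exists_eq_add_of_lt (Fintype.one_lt_card (α := F))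
  rw [hm, Nat.add_sub_cancel] at h_ncard
  rw [hm]
  exact Nat.eq_of_mul_eq_mul_right (Nat.succ_pos m) (by linarith)

theorem disjoint_projZeros_conic_linearForm {b c : F} (h : ∀ t, c + b * t + t ^ 2 ≠ 0) :
    Disjoint (projZeros (conic F)) (projZeros (linearForm ![c, b, 1])) := by
  refine Set.disjoint_left.2 fun P (h_conic : eval P.rep (conic F) = 0)
    (h_line : eval P.rep (linearForm _) = 0) => ?_
  rw [eval_conic_eq_zero_iff] at h_conic
  replace h_line : c * P.rep 0 + b * P.rep 1 + P.rep 2 = 0 := by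
    simpa [dotProduct, Fin.sum_univ_three] using h_line
  have h0 : P.rep 0 ≠ 0 := fun h0 => P.rep_nonzero <| by
    have h1 : P.rep 1 = 0 := by simpa [h0] using h_conic
    have h2 : P.rep 2 = 0 := by simpa [h0, h1] using h_line
    ext i
    fin_cases i
    exacts [h0, h1, h2]
  refine h (P.rep 1 / P.rep 0) ?_
  rw [div_pow, h_conic]
  field_simp
  linear_combination h_line

theorem ncard_projZeros_conic_mul_lines [Fintype F] {b c b' c' : F} (h_ne : (c, b) ≠ (c', b'))
    (h : ∀ t, c + b * t + t ^ 2 ≠ 0) (h' : ∀ t, c' + b' * t + t ^ 2 ≠ 0) :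
    (projZeros (conic F * (linearForm ![c, b, 1] * linearForm ![c', b', 1]))).ncard =
      3 * Fintype.card F + 2 := by
  have h_independent : LinearIndependent F ![![c, b, 1], ![c', b', 1]] := by
    rw [LinearIndependent.pair_iff' fun h_zero => one_ne_zero (congrFun h_zero 2)]
    intro a h_eq
    obtain rfl : a = 1 := by simpa using congrFun h_eq 2
    simp_all
  have h_disjoint := (disjoint_projZeros_conic_linearForm h).union_right
    (disjoint_projZeros_conic_linearForm h')
  rw [← projZeros_mul] at h_disjoint
  rw [projZeros_mul, Set.ncard_union_eq h_disjoint, ncard_projZeros_conic,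
    ncard_projZeros_linearForm_mul h_independent]
  ring

theorem exists_mem_formsThrough_ncard_projZeros_eq [Fintype F] {E : Type*} [Field E] [Algebra F E]
    (hF : 3 ≤ Fintype.card F) (hE : Module.finrank F E = 3) {v : Fin 3 → E}
    (hv : LinearIndependent F v) :
    ∃ f ∈ formsThrough F v 4, (projZeros f).ncard = 3 * Fintype.card F + 2 := by
  have : FiniteDimensional F E := Module.finite_of_finrank_pos (by lia)
  let powers := Field.powerBasisOfFiniteOfSeparable F E
  have h_dim : powers.dim = 3 := powers.finrank.symm.trans hE
  obtain ⟨B, hB, hBv⟩ := exists_isUnit_aeval_linearForm_eq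
    (basisOfLinearIndependentOfCardEqFinrank hv (by rw [Fintype.card_fin, hE]))
    (powers.basis.reindex (finCongr h_dim))
  rw [coe_basisOfLinearIndependentOfCardEqFinrank] at hBv
  obtain ⟨⟨c, b⟩, h, ⟨c', b'⟩, h', h_ne⟩ := (Set.one_lt_ncard).1 (one_lt_ncard_rootFree hF)
  let f := conic F * (linearForm ![c, b, 1] * linearForm ![c', b', 1])
  have hf : f.IsHomogeneous 4 := isHomogeneous_conic.mul
    ((isHomogeneous_linearForm _).mul (isHomogeneous_linearForm _))
  refine ⟨aeval (fun i => linearForm (B.row i)) f, ⟨?_, ?_⟩, ?_⟩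
  · simpa using hf.aeval _ fun i => isHomogeneous_linearForm (B.row i)
  · have h_conic : aeval v (aeval (fun i => linearForm (B.row i)) (conic F)) = 0 := by
      simp only [conic, map_sub, map_mul, map_pow, aeval_X, hBv]
      simp
    change aeval v (aeval (fun i => linearForm (B.row i)) f) = 0
    rw [map_mul, map_mul, h_conic, zero_mul]
  · rw [ncard_projZeros_aeval_linearForm hf four_ne_zero hB]
    exact ncard_projZeros_conic_mul_lines h_ne h h'

end Extremal

section Code

theorem card_projectivization_fin_three (F : Type*) [Field F] [Fintype F] :
    Nat.card (Projectivization F (Fin 3 → F)) = Fintype.card F ^ 2 + Fintype.card F + 1 := by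
  rw [Projectivization.card_of_finrank F (Fin 3 → F) (Module.finrank_fin_fun F),
    Nat.card_eq_fintype_card]
  simp only [Finset.sum_range_succ, Finset.sum_range_zero]
  ring

theorem ncard_eval_rep_ne_zero {F : Type*} [Field F] [Fintype F] (f : MvPolynomial (Fin 3) F) :
    {x : Projectivization F (Fin 3 → F) | eval x.rep f ≠ 0}.ncard =
      Fintype.card F ^ 2 + Fintype.card F + 1 - (projZeros f).ncard := by
  rw [← card_projectivization_fin_three]
  exact Set.ncard_compl (projZeros f)

theorem le_ncard_eval_rep_ne_zero {F E : Type*} [Field F] [Fintype F] [Field E] [Algebra F E]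
    {v : Fin 3 → E} (hv : LinearIndependent F v) :
    ∀ f ∈ formsThrough F v 4, f ≠ 0 →
      Fintype.card F ^ 2 - 2 * Fintype.card F - 1 ≤
        {x : Projectivization F (Fin 3 → F) | eval x.rep f ≠ 0}.ncard := by
  intro f hf hf0
  have h_zeros := ncard_projZeros_le_of_aeval_eq_zero hv hf.1 hf0 hf.2
  rw [ncard_eval_rep_ne_zero]
  lia

theorem sq_sub_two_mul_sub_one_pos {n : ℕ} (hn : 3 ≤ n) : 0 < n ^ 2 - 2 * n - 1 := by
  have h_sq := Nat.mul_le_mul_left n hn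
  rw [sq]
  lia

theorem finrank_eq_of_card_eq_pow {F E : Type*} [Field F] [Fintype F] [AddCommGroup E] [Module F E]
    [Fintype E] {n : ℕ} (hE : Fintype.card E = Fintype.card F ^ n) : Module.finrank F E = n :=
  Nat.pow_right_injective Fintype.one_lt_card (Module.card_eq_pow_finrank.symm.trans hE)

theorem linearIndependent_of_linearIndependent_frobenius {F E : Type*} [Field F] [Fintype F]
    [Field E] [Algebra F E] {v : Fin 3 → E}
    (hv : LinearIndependent E
      ![v, fun i => v i ^ Fintype.card F, fun i => v i ^ Fintype.card F ^ 2]) :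
    LinearIndependent F v := by
  let φ (j : Fin 3) : E →ₗ[F] E := (FiniteField.frobeniusAlgHom F E ^ (j : ℕ)).toLinearMap
  refine linearIndependent_of_linearIndependent_conjugates φ ?_
  convert hv using 1
  ext j i
  fin_cases j <;> simp [φ, sq, pow_mul]

end Code

theorem stmt_15_general {F E : Type*} [Field F] [Fintype F] [Field E] [Algebra F E]
    (hF : 3 ≤ Fintype.card F) (hE : Module.finrank F E = 3) {v : Fin 3 → E}
    (hv : LinearIndependent F v) :
    Nat.card (Projectivization F (Fin 3 → F)) = Fintype.card F ^ 2 + Fintype.card F + 1 ∧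
    Module.finrank F (formsThrough F v 4) = 12 ∧
    (∀ f ∈ formsThrough F v 4,
      (∀ x : Projectivization F (Fin 3 → F), eval x.rep f = 0) → f = 0) ∧
    (∀ f ∈ formsThrough F v 4, f ≠ 0 →
      Fintype.card F ^ 2 - 2 * Fintype.card F - 1 ≤
        {x : Projectivization F (Fin 3 → F) | eval x.rep f ≠ 0}.ncard) ∧
    (∃ f ∈ formsThrough F v 4, f ≠ 0 ∧
      {x : Projectivization F (Fin 3 → F) | eval x.rep f ≠ 0}.ncard =
        Fintype.card F ^ 2 - 2 * Fintype.card F - 1) := by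
  have finiteDimensional : FiniteDimensional F E := Module.finite_of_finrank_pos (by lia)
  have dimension := finrank_formsThrough
    (hv.span_eq_top_of_card_eq_finrank' ((Fintype.card_fin 3).trans hE.symm)) 3
  rw [hE, Fintype.card_fin] at dimension
  have distance_pos := sq_sub_two_mul_sub_one_pos hF
  obtain ⟨f, hf, h_zeros⟩ := exists_mem_formsThrough_ncard_projZeros_eq hF hE hv
  have weight_f : {x : Projectivization F (Fin 3 → F) | eval x.rep f ≠ 0}.ncard =
      Fintype.card F ^ 2 - 2 * Fintype.card F - 1 := by
    rw [ncard_eval_rep_ne_zero, h_zeros]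
    lia
  refine ⟨card_projectivization_fin_three F, Nat.add_left_cancel dimension, fun g hg hg_zero => ?_,
    le_ncard_eval_rep_ne_zero hv, f, hf, ?_, weight_f⟩
  · by_contra hg0
    exact (le_ncard_eval_rep_ne_zero hv g hg hg0).not_gt (by simpa [hg_zero] using distance_pos)
  · rintro rfl
    exact distance_pos.ne (by simpa using weight_f)

/-- Parameters of the code `C_L(Z, L_4)` for `q ≥ 4`: evaluating the quartics through a
degree-3 closed point (not on any rational line) at the `q² + q + 1` points of `P²(F_q)`
yields a code of length `q² + q + 1`, dimension `12` (the space of such quartics has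
dimension `12` and the evaluation map is injective), and minimum distance exactly
`q² - 2q - 1`. -/
theorem stmt_15 (q : ℕ) (hq : IsPrimePow q) (hq4 : 4 ≤ q)
    (F E : Type) [Field F] [Fintype F] [Field E] [Fintype E] [Algebra F E]
    (hF : Fintype.card F = q) (hE : Fintype.card E = q ^ 3)
    -- `v` represents a degree-3 closed point of `P²`: its three Frobenius conjugates are
    -- pairwise distinct and non-collinear (equivalently, linearly independent).
    (v : Fin 3 → E)
    (hv : LinearIndependent E ![v, fun i => v i ^ q, fun i => v i ^ q ^ 2]) :
    Nat.card (Projectivization F (Fin 3 → F)) = q ^ 2 + q + 1 ∧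
    Module.finrank F
      ↥(homogeneousSubmodule (Fin 3) F 4 ⊓
          LinearMap.ker (MvPolynomial.aeval (R := F) v).toLinearMap) = 12 ∧
    (∀ f ∈ homogeneousSubmodule (Fin 3) F 4 ⊓
        LinearMap.ker (MvPolynomial.aeval (R := F) v).toLinearMap,
      (∀ x : Projectivization F (Fin 3 → F), MvPolynomial.eval x.rep f = 0) → f = 0) ∧
    (∀ f ∈ homogeneousSubmodule (Fin 3) F 4 ⊓
        LinearMap.ker (MvPolynomial.aeval (R := F) v).toLinearMap, f ≠ 0 →
      q ^ 2 - 2 * q - 1 ≤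
        {x : Projectivization F (Fin 3 → F) | MvPolynomial.eval x.rep f ≠ 0}.ncard) ∧
    (∃ f ∈ homogeneousSubmodule (Fin 3) F 4 ⊓
        LinearMap.ker (MvPolynomial.aeval (R := F) v).toLinearMap, f ≠ 0 ∧
      {x : Projectivization F (Fin 3 → F) | MvPolynomial.eval x.rep f ≠ 0}.ncard
        = q ^ 2 - 2 * q - 1) := by
  subst hF
  exact stmt_15_general (by lia) (finrank_eq_of_card_eq_pow hE)
    (linearIndependent_of_linearIndependent_frobenius hv)
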